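/- Let f : [0,∞) → ℝ be càdlàg with Δf(t) ≥ 0 for every t > 0 and f(0) ≥ 0, let γ > 0, and set f^γ(u) = f(u) − γu. Let h be a solution of the sticky equation Sγ(f) with c(t) = Leb({s ∈ [0,t] : h(s) > 0}). Let c* : [0,∞) → [0,∞) be a continuous non-decreasing function with c*(0) = 0 such that for all 0 ≤ s ≤ t, Leb({r ∈ [s,t] : f^γ(c*(r)) + γr > 0}) ≤ c*(t) − c*(s). Then c(t) ≤ c*(t) for all t ≥ 0. -/

import Mathlib

/-!
Write `c` for `posTime h`. The elementary facts are that `c` is non-decreasing and 1-Lipschitz.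

First, `h ≥ 0` (`StickySol.nonneg`). If `h t < 0`, let `s` be the supremum of the times up to `t`
at which `h ≥ 0`. Neither the positive time nor the zero time grows on `[s, t]`, so `h s = h t < 0`
and `s` is a limit from the left of times at which `h ≥ 0`. Since `h` has a left limit at `s`
whose jump is non-negative, this is impossible. Hence the positive and zero times up to `t` add up to `t`, and
`h t = f (c t) - γ * c t + γ * t` (`StickySol.eq_drift`).

Now suppose `cs t < c t`, and let `s` be the last time before `t` at which `c s ≤ cs s`. For
`u ∈ (s, t]` the intermediate value theorem gives `v ∈ [s, u)` with `c v = cs u`, whence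
`f (cs u) - γ * cs u + γ * u = h v + γ * (u - v) > 0`. So the set in the hypothesis on `cs` has
full measure in `[s, t]`, which forces `cs t - cs s ≥ t - s ≥ c t - c s`: a contradiction.
-/

open MeasureTheory Set Function Filter Topology

/-- `f : ℝ → ℝ` is càdlàg on `[0,∞)`: right-continuous at every `t ≥ 0`
and with left limits at every `t > 0`. -/
def CadlagOn (f : ℝ → ℝ) : Prop :=
  (∀ t : ℝ, 0 ≤ t → ContinuousWithinAt f (Ici t) t) ∧
  (∀ t : ℝ, 0 < t → ∃ L : ℝ, Filter.Tendsto f (nhdsWithin t (Iio t)) (nhds L))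

/-- `f` has non-negative jumps on `(0,∞)`: `Δf(t) = f t − f(t−) ≥ 0`. -/
def NonnegJumps (f : ℝ → ℝ) : Prop :=
  ∀ t : ℝ, 0 < t → Function.leftLim f t ≤ f t

/-- `Leb({s ∈ [0,t] : h(s) > 0})`. -/
noncomputable def posTime (h : ℝ → ℝ) (t : ℝ) : ℝ :=
  (volume {s ∈ Icc (0:ℝ) t | 0 < h s}).toReal

/-- `Leb({s ∈ [0,t] : h(s) = 0})`. -/
noncomputable def zeroTime (h : ℝ → ℝ) (t : ℝ) : ℝ :=
  (volume {s ∈ Icc (0:ℝ) t | h s = 0}).toReal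

/-- `h` is a solution of the sticky equation `Sγ(f)`:
`h` is measurable on `[0,∞)` and, for all `t ≥ 0`,
`h(t) = f(Leb({s ∈ [0,t] : h(s) > 0})) + γ·Leb({s ∈ [0,t] : h(s) = 0})`. -/
def StickySol (f : ℝ → ℝ) (γ : ℝ) (h : ℝ → ℝ) : Prop :=
  Measurable ((Ici (0:ℝ)).restrict h) ∧
  ∀ t : ℝ, 0 ≤ t → h t = f (posTime h t) + γ * zeroTime h t

lemma volume_sep_Icc_ne_top (a b : ℝ) (p : ℝ → Prop) : volume {u ∈ Icc a b | p u} ≠ ⊤ :=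
  measure_ne_top_of_subset (sep_subset _ _) measure_Icc_lt_top.ne

lemma volume_sep_Icc_mono (p : ℝ → Prop) {a b : ℝ} (hab : a ≤ b) :
    (volume {u ∈ Icc (0:ℝ) a | p u}).toReal ≤ (volume {u ∈ Icc (0:ℝ) b | p u}).toReal :=
  ENNReal.toReal_mono (volume_sep_Icc_ne_top _ _ _)
    (measure_mono fun _ hu => ⟨⟨hu.1.1, hu.1.2.trans hab⟩, hu.2⟩)

lemma posTime_mono (h : ℝ → ℝ) : Monotone (posTime h) := fun _ _ hab =>
  volume_sep_Icc_mono (fun u => 0 < h u) hab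

lemma zeroTime_mono (h : ℝ → ℝ) : Monotone (zeroTime h) := fun _ _ hab =>
  volume_sep_Icc_mono (fun u => h u = 0) hab

lemma posTime_zero (h : ℝ → ℝ) : posTime h 0 = 0 := by
  have : volume {s ∈ Icc (0:ℝ) 0 | 0 < h s} = 0 :=
    measure_mono_null (sep_subset _ _) (by simp)
  rw [posTime, this, ENNReal.toReal_zero]

lemma zeroTime_zero (h : ℝ → ℝ) : zeroTime h 0 = 0 := by
  have : volume {s ∈ Icc (0:ℝ) 0 | h s = 0} = 0 :=
    measure_mono_null (sep_subset _ _) (by simp)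
  rw [zeroTime, this, ENNReal.toReal_zero]

lemma posTime_le_add (h : ℝ → ℝ) {a b : ℝ} (hab : a ≤ b) :
    posTime h b ≤ posTime h a + (b - a) := by
  have hsub : {u ∈ Icc (0:ℝ) b | 0 < h u} ⊆ {u ∈ Icc (0:ℝ) a | 0 < h u} ∪ Icc a b := by
    intro u hu
    rcases le_total u a with hua | hua
    · exact Or.inl ⟨⟨hu.1.1, hua⟩, hu.2⟩
    · exact Or.inr ⟨hua, hu.1.2⟩
  have hle := (measure_mono (μ := volume) hsub).trans (measure_union_le _ _)
  have hfin := volume_sep_Icc_ne_top 0 a (fun u => 0 < h u)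
  have hfin' : volume (Icc a b) ≠ ⊤ := measure_Icc_lt_top.ne
  have := ENNReal.toReal_mono (ENNReal.add_ne_top.2 ⟨hfin, hfin'⟩) hle
  rw [ENNReal.toReal_add hfin hfin', Real.volume_Icc,
    ENNReal.toReal_ofReal (sub_nonneg.2 hab)] at this
  exact this

lemma continuous_posTime (h : ℝ → ℝ) : Continuous (posTime h) := by
  refine (LipschitzWith.of_le_add fun a b => ?_).continuous
  rcases le_total a b with hab | hab
  · exact (posTime_mono h hab).trans (le_add_of_nonneg_right dist_nonneg)
  · rw [Real.dist_eq, abs_of_nonneg (sub_nonneg.2 hab)]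
    exact posTime_le_add h hab

/-- The zero time need not be known to be continuous here: its monotonicity suffices, since only
an upper bound for `h` just before the time `s` is used. -/
lemma StickySol.nonneg {f h : ℝ → ℝ} {γ : ℝ} (hγ : 0 < γ) (hf : CadlagOn f)
    (hjump : NonnegJumps f) (hf0 : 0 ≤ f 0) (hsol : StickySol f γ h) {t : ℝ} (ht : 0 ≤ t) :
    0 ≤ h t := by
  by_contra! hneg
  have h0 : 0 ≤ h 0 := by
    rw [hsol.2 0 le_rfl, posTime_zero, zeroTime_zero]; simpa using hf0
  set S : Set ℝ := {r ∈ Icc (0:ℝ) t | 0 ≤ h r} with hS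
  have hne : S.Nonempty := ⟨0, ⟨le_rfl, ht⟩, h0⟩
  have hbdd : BddAbove S := ⟨t, fun r hr => hr.1.2⟩
  set s := sSup S
  have hs0 : 0 ≤ s := le_csSup hbdd ⟨⟨le_rfl, ht⟩, h0⟩
  have hst : s ≤ t := csSup_le hne fun r hr => hr.1.2
  -- A set of times where `h ≥ 0` gains nothing between `s` and `t`.
  have hfreeze : ∀ p : ℝ → Prop, (∀ u, p u → 0 ≤ h u) →
      {u ∈ Icc (0:ℝ) t | p u} = {u ∈ Icc (0:ℝ) s | p u} := by
    intro p hp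
    ext u
    exact ⟨fun hu => ⟨⟨hu.1.1, le_csSup hbdd ⟨hu.1, hp u hu.2⟩⟩, hu.2⟩,
      fun hu => ⟨⟨hu.1.1, hu.1.2.trans hst⟩, hu.2⟩⟩
  have hpos : posTime h t = posTime h s := by
    simp only [posTime, hfreeze (fun u => 0 < h u) fun u hu => hu.le]
  have hzero : zeroTime h t = zeroTime h s := by
    simp only [zeroTime, hfreeze (fun u => h u = 0) fun u hu => hu.ge]
  have hhs : f (posTime h s) + γ * zeroTime h s < 0 := by
    rw [← hpos, ← hzero, ← hsol.2 t ht]; exact hneg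
  have hsS : s ∉ S := fun hmem => by
    have := hmem.2
    rw [hsol.2 s hs0] at this
    linarith
  -- Points of `S` accumulate at `s` strictly from the left.
  have hacc : ∀ a < s, ∃ r ∈ S, a < r ∧ r < s := by
    intro a ha
    obtain ⟨r, hr, har⟩ := exists_lt_of_lt_csSup hne ha
    exact ⟨r, hr, har, (le_csSup hbdd hr).lt_of_ne fun he => hsS (by rwa [he] at hr)⟩
  have hspos : 0 < s := hs0.lt_of_ne fun he => hsS (he ▸ ⟨⟨le_rfl, ht⟩, h0⟩)
  have hz : ∀ r < s, γ * zeroTime h r ≤ γ * zeroTime h s := fun r hr =>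
    mul_le_mul_of_nonneg_left (zeroTime_mono h hr.le) hγ.le
  by_cases hflat : ∃ a < s, posTime h a = posTime h s
  · -- `posTime h` is constant just before `s`, so `h` is non-decreasing there.
    obtain ⟨a, ha, hae⟩ := hflat
    obtain ⟨r, hr, har, hrs⟩ := hacc a ha
    have hre : posTime h r = posTime h s :=
      le_antisymm (posTime_mono h hrs.le) (hae ▸ posTime_mono h har.le)
    have h1 := hr.2
    rw [hsol.2 r hr.1.1, hre] at h1
    linarith [hz r hrs]
  · -- `posTime h` reaches its value at `s` strictly from below, so the left limit of `f` enters.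
    push Not at hflat
    have hlt : ∀ r < s, posTime h r < posTime h s := fun r hr =>
      (posTime_mono h hr.le).lt_of_ne (hflat r hr)
    have hcs : 0 < posTime h s := by simpa [posTime_zero] using hlt 0 hspos
    obtain ⟨L, hL⟩ := hf.2 _ hcs
    have hLe : L ≤ f (posTime h s) := by
      rw [← leftLim_eq_of_tendsto hL]; exact hjump _ hcs
    have htend : Tendsto (posTime h) (𝓝[<] s) (𝓝[<] (posTime h s)) :=
      tendsto_nhdsWithin_of_tendsto_nhds_of_eventually_within _
        ((continuous_posTime h).continuousAt.mono_left nhdsWithin_le_nhds)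
        (by filter_upwards [self_mem_nhdsWithin] with r hr using hlt r hr)
    have hev : ∀ᶠ r in 𝓝[<] s, f (posTime h r) < -(γ * zeroTime h s) :=
      (hL.comp htend).eventually_lt_const (by linarith)
    obtain ⟨a, ha, hsub⟩ := (mem_nhdsLT_iff_exists_Ioo_subset' hspos).1 hev
    obtain ⟨r, hr, har, hrs⟩ := hacc a ha
    have h1 := hr.2
    rw [hsol.2 r hr.1.1] at h1
    have h2 : f (posTime h r) < -(γ * zeroTime h s) := hsub ⟨har, hrs⟩
    linarith [hz r hrs]

lemma StickySol.eq_drift {f h : ℝ → ℝ} {γ : ℝ} (hγ : 0 < γ) (hf : CadlagOn f)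
    (hjump : NonnegJumps f) (hf0 : 0 ≤ f 0) (hsol : StickySol f γ h) {t : ℝ} (ht : 0 ≤ t) :
    h t = (f (posTime h t) - γ * posTime h t) + γ * t := by
  have hmeas : MeasurableSet {u ∈ Icc (0:ℝ) t | h u = 0} := by
    have h1 : MeasurableSet ((Ici (0:ℝ)).domRestrict h ⁻¹' {0}) := hsol.1 (measurableSet_singleton 0)
    have h2 := (measurableSet_Ici.subtype_image h1).inter (measurableSet_Icc (a := (0:ℝ)) (b := t))
    convert h2 using 1
    ext u
    constructor
    · intro hu
      exact ⟨⟨⟨u, hu.1.1⟩, hu.2, rfl⟩, hu.1⟩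
    · rintro ⟨⟨v, hv, rfl⟩, hu⟩
      exact ⟨hu, hv⟩
  have hunion : {u ∈ Icc (0:ℝ) t | 0 < h u} ∪ {u ∈ Icc (0:ℝ) t | h u = 0} = Icc 0 t := by
    ext u
    constructor
    · rintro (hu | hu) <;> exact hu.1
    · intro hu
      rcases (hsol.nonneg hγ hf hjump hf0 hu.1).lt_or_eq with hp | hp
      · exact Or.inl ⟨hu, hp⟩
      · exact Or.inr ⟨hu, hp.symm⟩
  have hdisj : Disjoint {u ∈ Icc (0:ℝ) t | 0 < h u} {u ∈ Icc (0:ℝ) t | h u = 0} :=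
    Set.disjoint_left.2 fun u hu hu' => hu.2.ne' hu'.2
  have hsum := measure_union (μ := volume) hdisj hmeas
  rw [hunion, Real.volume_Icc, sub_zero] at hsum
  have hadd : t = posTime h t + zeroTime h t := by
    rw [posTime, zeroTime, ← ENNReal.toReal_add (volume_sep_Icc_ne_top _ _ _)
      (volume_sep_Icc_ne_top _ _ _), ← hsum, ENNReal.toReal_ofReal ht]
  rw [hsol.2 t ht]
  linear_combination (-γ) * hadd

/-- First comparison lemma: if `h` solves `Sγ(f)` with time change `c`, and
`c*` is continuous, non-decreasing, vanishes at `0` and satisfies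
`Leb({r ∈ [s,t] : f^γ(c*(r)) + γr > 0}) ≤ c*(t) − c*(s)` for `0 ≤ s ≤ t`,
then `c ≤ c*` on `[0,∞)`. -/
theorem sticky_time_change_le
    (f h cs : ℝ → ℝ) (γ : ℝ) (hγ : 0 < γ)
    (hf : CadlagOn f) (hjump : NonnegJumps f) (hf0 : 0 ≤ f 0)
    (hsol : StickySol f γ h)
    (hcs_cont : ContinuousOn cs (Ici 0))
    (hcs_mono : MonotoneOn cs (Ici 0))
    (hcs_nonneg : ∀ t : ℝ, 0 ≤ t → 0 ≤ cs t)
    (hcs0 : cs 0 = 0)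
    (hcs_ineq : ∀ s t : ℝ, 0 ≤ s → s ≤ t →
      (volume {u ∈ Icc s t | 0 < (f (cs u) - γ * cs u) + γ * u}).toReal
        ≤ cs t - cs s) :
    ∀ t : ℝ, 0 ≤ t → posTime h t ≤ cs t := by
  intro t ht
  by_contra! hlt
  set T : Set ℝ := {r ∈ Icc (0:ℝ) t | posTime h r ≤ cs r}
  have hne : T.Nonempty := ⟨0, ⟨le_rfl, ht⟩, by rw [posTime_zero, hcs0]⟩
  have hbdd : BddAbove T := ⟨t, fun r hr => hr.1.2⟩
  have hclosed : IsClosed T := isClosed_Icc.isClosed_le (continuous_posTime h).continuousOn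
    (hcs_cont.mono fun r hr => hr.1)
  obtain ⟨⟨hs0, hst⟩, hs⟩ := hclosed.csSup_mem hne hbdd
  set s := sSup T
  have hpos : Ioc s t ⊆ {u ∈ Icc s t | 0 < (f (cs u) - γ * cs u) + γ * u} := by
    intro u hu
    have hu0 : 0 ≤ u := hs0.trans hu.1.le
    have hcu : cs u < posTime h u := by
      by_contra! hle
      exact absurd (le_csSup hbdd (⟨⟨hu0, hu.2⟩, hle⟩ : u ∈ T)) hu.1.not_ge
    obtain ⟨v, hv, hve⟩ := intermediate_value_Icc hu.1.le (continuous_posTime h).continuousOn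
      ⟨hs.trans (hcs_mono hs0 hu0 hu.1.le), hcu.le⟩
    have hvu : v < u := hv.2.lt_of_ne fun he => by rw [he] at hve; exact hcu.ne' hve
    have hv0 : 0 ≤ v := hs0.trans hv.1
    have h1 := hsol.nonneg hγ hf hjump hf0 hv0
    rw [hsol.eq_drift hγ hf hjump hf0 hv0, hve] at h1
    exact ⟨⟨hu.1.le, hu.2⟩, by nlinarith⟩
  have hvol := ENNReal.toReal_mono (volume_sep_Icc_ne_top _ _ _) (measure_mono (μ := volume) hpos)
  rw [Real.volume_Ioc, ENNReal.toReal_ofReal (sub_nonneg.2 hst)] at hvol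
  linarith [hcs_ineq s t hs0 hst, posTime_le_add h hst]
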